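/- arXiv:2402.07816 — 2 statements merged into one kernel-verified Lean document; each statement's English description precedes it below -/
import Mathlib

section
/- If (V^α)_{α∈ℚ} and (Ṽ^α)_{α∈ℚ} are both V-filtrations on M (with respect to the same data T, D, C), then V^α = Ṽ^α for every α ∈ ℚ. In other words, M admits at most one V-filtration. -/
open Module

section VFiltration

variable {k : Type*} [Field k] [CharZero k]
variable {M : Type*} [AddCommGroup M] [Module k M]

/-- The subalgebra `A0 ⊆ End_k(M)` generated by `T`, `S = -(D∘T)` and the set `C`. -/
def VFilt.A0 (T D : Module.End k M) (C : Set (Module.End k M)) :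
    Subalgebra k (Module.End k M) :=
  Algebra.adjoin k ({T, -(D * T)} ∪ C)

/-- `V^{>α} = ⋃_{β > α} V^β`. -/
def VFilt.gt (V : ℚ → Submodule k M) (α : ℚ) : Submodule k M := ⨆ β > α, V β

/-- A weak `V`-filtration on `M` with respect to the data `T`, `D`, `C`. -/
structure IsWeakVFiltration (T D : Module.End k M) (C : Set (Module.End k M))
    (V : ℚ → Submodule k M) : Prop where
  /-- decreasing -/
  antitone : Antitone V
  /-- exhaustive -/
  exhaustive : ∀ m : M, ∃ α : ℚ, m ∈ V α
  /-- discrete and left-continuous -/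
  discrete : ∃ ℓ : ℕ, 0 < ℓ ∧ ∀ (i : ℤ) (α β : ℚ),
    α ∈ Set.Ioc ((i : ℚ) / ℓ) ((i + 1 : ℚ) / ℓ) →
    β ∈ Set.Ioc ((i : ℚ) / ℓ) ((i + 1 : ℚ) / ℓ) → V α = V β
  /-- each `V^α` is stable under every element of `A0` -/
  stable : ∀ a ∈ VFilt.A0 T D C, ∀ α : ℚ, (V α).map a ≤ V α
  /-- `T(V^α) ⊆ V^{α+1}` -/
  mapT_le : ∀ α : ℚ, (V α).map T ≤ V (α + 1)
  /-- `D(V^α) ⊆ V^{α-1}` -/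
  mapD_le : ∀ α : ℚ, (V α).map D ≤ V (α - 1)
  /-- `(S + α·id)^N (V^α) ⊆ V^{>α}` for some `N ≥ 1` -/
  nilpotent : ∀ α : ℚ, ∃ N : ℕ, 1 ≤ N ∧ ∀ u ∈ V α,
    ((-(D * T) + (α : k) • (1 : Module.End k M)) ^ N) u ∈ VFilt.gt V α

/-- A `V`-filtration on `M`: a weak `V`-filtration such that each `V^α` is a finitely
generated `A0`-module and `T(V^α) = V^{α+1}` for `α > 0`. -/
structure IsVFiltration (T D : Module.End k M) (C : Set (Module.End k M))
    (V : ℚ → Submodule k M) extends IsWeakVFiltration T D C V : Prop where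
  /-- each `V^α` is a finitely generated `A0`-module: it is the smallest `A0`-stable
  `k`-subspace containing some finite set -/
  fg : ∀ α : ℚ, ∃ F : Finset M, (↑F : Set M) ⊆ (V α : Set M) ∧
    ∀ W : Submodule k M, (∀ a ∈ VFilt.A0 T D C, W.map a ≤ W) →
      (↑F : Set M) ⊆ (W : Set M) → V α ≤ W
  /-- `T(V^α) = V^{α+1}` for `α > 0` -/
  mapT_eq : ∀ α : ℚ, 0 < α → (V α).map T = V (α + 1)

end VFiltration

/-!
Write `S = -(D∘T)`. For `α ≤ γ`, some product of factors `s + δ` with `δ ∈ [α, γ)`, evaluated at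
`S`, maps `V^α` into `V^γ`, since only finitely many jumps separate the two indices. Finite
generation gives `V^α ⊆ V'^β` for some `β`, and translating such an inclusion by powers of `T` gives
`V^γ ⊆ V'^α` for some `γ`. Hence some polynomial `p` with factors `s + δ`, `δ ∈ [α, γ)`, maps `V^α`
into `V'^α`, and so does some `q` with factors `s + δ`, `δ ∈ [β, α)`. In characteristic zero `p` and
`q` are coprime, so a Bézout relation between `p(S)` and `q(S)` gives `V^α ⊆ V'^α`.
-/

section General

theorem isCoprime_of_mem_closure {R : Type*} [CommSemiring R] {A B : Set R}
    (hAB : ∀ a ∈ A, ∀ b ∈ B, IsCoprime a b) {p q : R} (hp : p ∈ Submonoid.closure A)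
    (hq : q ∈ Submonoid.closure B) : IsCoprime p q := by
  have isCoprime_right {a : R} (ha : a ∈ A) : IsCoprime a q :=
    Submonoid.closure_induction (fun b hb => hAB a ha b hb) isCoprime_one_right
      (fun _ _ _ _ => IsCoprime.mul_right) hq
  exact Submonoid.closure_induction (fun _ => isCoprime_right) isCoprime_one_left
    (fun _ _ _ _ => IsCoprime.mul_left) hp

theorem lt_floor_mul_add_one_div {K : Type*} [Field K] [LinearOrder K] [IsStrictOrderedRing K]
    [FloorRing K] {ℓ : K} (hℓ : 0 < ℓ) (x : K) : x < (⌊x * ℓ⌋ + 1) / ℓ :=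
  (lt_div_iff₀ hℓ).2 (Int.lt_floor_add_one _)

theorem induction_floor_mul_add_one_div {K : Type*} [Field K] [LinearOrder K]
    [IsStrictOrderedRing K] [FloorRing K] {ℓ : K} (hℓ : 0 < ℓ) {c : K} {P : K → Prop}
    (base : ∀ x, c ≤ x → P x) (step : ∀ x < c, P ((⌊x * ℓ⌋ + 1) / ℓ) → P x) (x : K) : P x := by
  have P_of_le (n : ℕ) : ∀ x, c * ℓ ≤ ⌊x * ℓ⌋ + n → P x := by
    induction n with
    | zero =>
      intro x hx
      refine base x (le_of_mul_le_mul_right (hx.trans ?_) hℓ)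
      simpa using Int.floor_le (x * ℓ)
    | succ n ih =>
      intro x hx
      rcases le_or_gt c x with hcx | hxc
      · exact base x hcx
      · refine step x hxc (ih _ (hx.trans_eq ?_))
        have floor_next : ⌊((⌊x * ℓ⌋ + 1 : K) / ℓ) * ℓ⌋ = ⌊x * ℓ⌋ + 1 := by
          rw [div_mul_cancel₀ _ hℓ.ne']
          exact_mod_cast Int.floor_intCast (R := K) (⌊x * ℓ⌋ + 1)
        rw [floor_next]
        push_cast
        ring
  obtain ⟨n, hn⟩ := exists_nat_ge (c * ℓ - ⌊x * ℓ⌋)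
  exact P_of_le n x (sub_le_iff_le_add'.1 hn)

end General

namespace VFilt

open Polynomial

/-- The multiplicative monoid of products of factors `X + δ` with `δ ∈ I`. The sign is that of the
operators `S + α` in a weak `V`-filtration, so the roots are the numbers `-δ`. -/
noncomputable def factorMonoid (k : Type*) [Field k] (I : Set ℚ) : Submonoid k[X] :=
  Submonoid.closure ((fun δ : ℚ => X + C (δ : k)) '' I)

section FactorMonoid

variable {k : Type*} [Field k] {I J : Set ℚ}

theorem factorMonoid_mono (h : I ⊆ J) : factorMonoid k I ≤ factorMonoid k J :=
  Submonoid.closure_mono (Set.image_mono h)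

theorem X_add_C_mem_factorMonoid {δ : ℚ} (h : δ ∈ I) : X + C (δ : k) ∈ factorMonoid k I :=
  Submonoid.subset_closure (Set.mem_image_of_mem _ h)

theorem isCoprime_X_add_C [CharZero k] {δ ε : ℚ} (h : δ ≠ ε) :
    IsCoprime (X + C (δ : k)) (X + C (ε : k)) := by
  have injective_neg_cast : Function.Injective fun δ : ℚ => -(δ : k) :=
    neg_injective.comp Rat.cast_injective
  simpa only [Function.onFun, C_neg, sub_neg_eq_add] using
    pairwise_coprime_X_sub_C injective_neg_cast h

theorem isCoprime_of_mem_factorMonoid [CharZero k] (hIJ : Disjoint I J) {p q : k[X]}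
    (hp : p ∈ factorMonoid k I) (hq : q ∈ factorMonoid k J) : IsCoprime p q := by
  refine isCoprime_of_mem_closure ?_ hp hq
  rintro _ ⟨δ, hδ, rfl⟩ _ ⟨ε, hε, rfl⟩
  exact isCoprime_X_add_C (hIJ.ne_of_mem hδ hε)

end FactorMonoid

end VFilt

section WeakVFiltration

open Polynomial VFilt

variable {k : Type*} [Field k] {M : Type*} [AddCommGroup M] [Module k M]
  {T D : Module.End k M} {C : Set (Module.End k M)} {V V' : ℚ → Submodule k M}

namespace IsWeakVFiltration

theorem aeval_apply_mem (hV : IsWeakVFiltration T D C V) (p : k[X]) {α : ℚ} {u : M}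
    (hu : u ∈ V α) : aeval (-(D * T)) p u ∈ V α := by
  have aeval_mem_A0 : aeval (-(D * T)) p ∈ A0 T D C :=
    Algebra.adjoin_mono (by simp) (aeval_mem_adjoin_singleton k (-(D * T)))
  exact hV.stable _ aeval_mem_A0 α (Submodule.mem_map_of_mem hu)

theorem exists_gt_le (hV : IsWeakVFiltration T D C V) :
    ∃ ℓ : ℚ, 0 < ℓ ∧ ∀ α, VFilt.gt V α ≤ V ((⌊α * ℓ⌋ + 1) / ℓ) := by
  obtain ⟨ℓ, hℓ, hconst⟩ := hV.discrete
  have hℓ : (0 : ℚ) < ℓ := Nat.cast_pos.2 hℓ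
  refine ⟨ℓ, hℓ, fun α => iSup₂_le fun β hαβ => ?_⟩
  have floor_div_le : (⌊α * ℓ⌋ : ℚ) / ℓ ≤ α := (div_le_iff₀ hℓ).2 (Int.floor_le _)
  rcases le_total β ((⌊α * ℓ⌋ + 1) / ℓ) with hβ | hβ
  · exact (hconst ⌊α * ℓ⌋ β _ ⟨floor_div_le.trans_lt hαβ, hβ⟩
      ⟨floor_div_le.trans_lt (lt_floor_mul_add_one_div hℓ α), le_rfl⟩).le
  · exact hV.antitone hβ

theorem exists_aeval_apply_mem_gt (hV : IsWeakVFiltration T D C V) (α : ℚ) :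
    ∃ p ∈ factorMonoid k {α}, ∀ u ∈ V α, aeval (-(D * T)) p u ∈ VFilt.gt V α := by
  obtain ⟨N, -, hN⟩ := hV.nilpotent α
  refine ⟨_, pow_mem (X_add_C_mem_factorMonoid (Set.mem_singleton α)) N, fun u hu => ?_⟩
  simpa only [map_pow, map_add, aeval_X, aeval_C, Algebra.algebraMap_eq_smul_one] using hN u hu

theorem exists_aeval_apply_mem (hV : IsWeakVFiltration T D C V) (α γ : ℚ) :
    ∃ p ∈ factorMonoid k (Set.Ico α γ), ∀ u ∈ V α, aeval (-(D * T)) p u ∈ V γ := by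
  obtain ⟨ℓ, hℓ, gt_le⟩ := hV.exists_gt_le
  induction α using induction_floor_mul_add_one_div hℓ (c := γ) with
  | base α hγα => exact ⟨1, one_mem _, fun u hu => by simpa using hV.antitone hγα hu⟩
  | step α hαγ ih =>
    obtain ⟨p, hp, hpV⟩ := ih
    obtain ⟨q, hq, hqV⟩ := hV.exists_aeval_apply_mem_gt α
    have hα_next := (lt_floor_mul_add_one_div hℓ α).le
    refine ⟨p * q, mul_mem (factorMonoid_mono (Set.Ico_subset_Ico_left hα_next) hp)
      (factorMonoid_mono (by simpa using hαγ) hq), fun u hu => ?_⟩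
    rw [map_mul, Module.End.mul_apply]
    exact hpV _ (gt_le α (hqV u hu))

end IsWeakVFiltration

namespace IsVFiltration

theorem exists_le_apply (hV : IsVFiltration T D C V) (hV' : IsWeakVFiltration T D C V') (α : ℚ) :
    ∃ β, V α ≤ V' β := by
  obtain ⟨F, -, le_of_subset⟩ := hV.fg α
  choose index mem_index using hV'.exhaustive
  obtain ⟨β, hβ⟩ := (F.image index).bddBelow
  refine ⟨β, le_of_subset _ (fun a ha => hV'.stable a ha β) fun x hx => ?_⟩
  exact hV'.antitone (hβ (Finset.mem_image_of_mem index hx)) (mem_index x)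

theorem le_add_natCast (hV : IsVFiltration T D C V) (hV' : IsWeakVFiltration T D C V') {α β : ℚ}
    (hα : 0 < α) (h : V α ≤ V' β) (n : ℕ) : V (α + n) ≤ V' (β + n) := by
  induction n with
  | zero => simpa using h
  | succ n ih =>
    calc V (α + (n + 1 : ℕ)) = (V (α + n)).map T := by
          rw [hV.mapT_eq _ (by positivity), Nat.cast_succ, add_assoc]
      _ ≤ (V' (β + n)).map T := Submodule.map_mono ih
      _ ≤ V' (β + n + 1) := hV'.mapT_le _
      _ = V' (β + (n + 1 : ℕ)) := by rw [Nat.cast_succ, add_assoc]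

theorem exists_apply_le (hV : IsVFiltration T D C V) (hV' : IsWeakVFiltration T D C V') (α : ℚ) :
    ∃ γ, V γ ≤ V' α := by
  obtain ⟨β, hβ⟩ := hV.exists_le_apply hV' 1
  obtain ⟨n, hn⟩ := exists_nat_ge (α - β)
  exact ⟨1 + n, (hV.le_add_natCast hV' one_pos hβ n).trans
    (hV'.antitone (sub_le_iff_le_add'.1 hn))⟩

end IsVFiltration

end WeakVFiltration

open Polynomial in
theorem stmt7_general {k : Type*} [Field k] [CharZero k]
    {M : Type*} [AddCommGroup M] [Module k M]
    {T D : Module.End k M} {C : Set (Module.End k M)} {V V' : ℚ → Submodule k M}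
    (hV : IsVFiltration T D C V) (hV' : IsWeakVFiltration T D C V') (α : ℚ) :
    V α ≤ V' α := by
  intro u hu
  obtain ⟨β, hβ⟩ := hV.exists_le_apply hV' α
  obtain ⟨γ, hγ⟩ := hV.exists_apply_le hV' α
  obtain ⟨p, hp, hpV⟩ := hV.exists_aeval_apply_mem α γ
  obtain ⟨q, hq, hqV'⟩ := hV'.exists_aeval_apply_mem β α
  obtain ⟨a, b, hab⟩ : IsCoprime p q :=
    VFilt.isCoprime_of_mem_factorMonoid (Set.Ico_disjoint_Ico_same (a := β)).symm hp hq
  have bezout : aeval (-(D * T)) a (aeval (-(D * T)) p u) +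
      aeval (-(D * T)) b (aeval (-(D * T)) q u) = u := by
    simpa only [map_add, map_mul, map_one, LinearMap.add_apply, Module.End.mul_apply,
      Module.End.one_apply] using congr(aeval (-(D * T)) $hab u)
  rw [← bezout]
  exact add_mem (hV'.aeval_apply_mem a (hγ (hpV u hu))) (hV'.aeval_apply_mem b (hqV' u (hβ hu)))

/-- **Proposition 3.8.** `M` admits at most one `V`-filtration. -/
theorem stmt7 {k : Type*} [Field k] [CharZero k]
    {M : Type*} [AddCommGroup M] [Module k M]
    (T D : Module.End k M) (C : Set (Module.End k M))
    (hweyl : D * T - T * D = 1)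
    (hC : ∀ c ∈ C, Commute c T ∧ Commute c D)
    (V V' : ℚ → Submodule k M)
    (hV : IsVFiltration T D C V) (hV' : IsVFiltration T D C V') :
    ∀ α : ℚ, V α = V' α := by
  exact fun α => le_antisymm (stmt7_general hV hV'.toIsWeakVFiltration α)
    (stmt7_general hV' hV.toIsWeakVFiltration α)
end

section
/- Let (V^α)_{α∈ℚ} be a V-filtration on M and assume that T is injective on M (M has no t-torsion). Then for every u ∈ M and every α ∈ ℚ, one has u ∈ V^α if and only if T(u) ∈ V^{α+1}. If, in addition, T is bijective on M, then V^{α+1} = T(V^α) for every α ∈ ℚ. -/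
open Module

/-!
Suppose `α ≤ 0` and `T u ∈ V^{α+1}`, so that `S u = -D (T u) ∈ V^α`. If `u ∉ V^α`, discreteness
gives `β < α` with `u ∈ V^β` but `u ∉ V^{>β}`. On `V^β / V^{>β}` the operator `S + β` is nilpotent,
while it multiplies the class of `u` by `β`, because `S u ∈ V^α ⊆ V^{>β}`. As `β < 0`, this class
vanishes, a contradiction. In particular `ker T ⊆ V^α` for `α ≤ 0`. For `α > 0` the axiom
`T V^α = V^{α+1}` determines `V^α` up to `ker T`.
-/

theorem pow_apply_sub_pow_smul_mem {R M : Type*} [Ring R] [AddCommGroup M] [Module R M]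
    {W : Submodule R M} {f : Module.End R M} (hf : W.map f ≤ W) {c : R} {u : M}
    (hu : f u - c • u ∈ W) (n : ℕ) : (f ^ n) u - c ^ n • u ∈ W := by
  induction n with
  | zero => simp
  | succ n ih =>
    have telescope : (f ^ (n + 1)) u - c ^ (n + 1) • u =
        f ((f ^ n) u - c ^ n • u) + c ^ n • (f u - c • u) := by
      rw [pow_succ', Module.End.mul_apply, pow_succ, mul_smul, map_sub, map_smul, smul_sub,
        sub_add_sub_cancel]
    rw [telescope]
    exact W.add_mem (hf (Submodule.mem_map_of_mem ih)) (W.smul_mem _ hu)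

namespace VFilt

variable {k : Type*} [Field k] {M : Type*} [AddCommGroup M] [Module k M]
  {V : ℚ → Submodule k M} {α β : ℚ}

theorem le_gt (h : α < β) : V β ≤ gt V α :=
  le_iSup₂_of_le β h le_rfl

theorem gt_le_of_eqOn_Ioc (hV : Antitone V) (h : ∀ γ ∈ Set.Ioc α β, V γ = V β) :
    gt V α ≤ V β := by
  refine iSup₂_le fun γ hγ => ?_
  rcases le_total γ β with hγβ | hβγ
  · exact (h γ ⟨hγ, hγβ⟩).le
  · exact hV hβγ

theorem map_gt_le {f : Module.End k M} (h : ∀ β > α, (V β).map f ≤ V β) :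
    (gt V α).map f ≤ gt V α := by
  simp only [gt, Submodule.map_iSup]
  exact iSup₂_mono h

end VFilt

namespace IsWeakVFiltration

variable {k : Type*} [Field k] {M : Type*} [AddCommGroup M] [Module k M]
  {T D : Module.End k M} {C : Set (Module.End k M)} {V : ℚ → Submodule k M} {α β : ℚ} {u : M}

theorem exists_lt_mem_notMem_gt (hV : IsWeakVFiltration T D C V) (hu : u ∉ V α) :
    ∃ β < α, u ∈ V β ∧ u ∉ VFilt.gt V β := by
  obtain ⟨ℓ, hℓ, hconst⟩ := hV.discrete
  have hℓ_pos : (0 : ℚ) < ℓ := by exact_mod_cast hℓ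
  have lt_of_mem {β : ℚ} (hβ : u ∈ V β) : β < α :=
    lt_of_not_ge fun hαβ => hu (hV.antitone hαβ hβ)
  have bounded : ∃ b : ℤ, ∀ i : ℤ, u ∈ V (i / ℓ) → i ≤ b := by
    refine ⟨⌊α * ℓ⌋, fun i hi => Int.le_floor.2 ?_⟩
    exact ((div_lt_iff₀ hℓ_pos).1 (lt_of_mem hi)).le
  have nonempty : ∃ i : ℤ, u ∈ V (i / ℓ) := by
    obtain ⟨β, hβ⟩ := hV.exhaustive u
    exact ⟨⌊β * ℓ⌋, hV.antitone ((div_le_iff₀ hℓ_pos).2 (Int.floor_le _)) hβ⟩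
  obtain ⟨i, hi, hmax⟩ := Int.exists_greatest_of_bdd bounded nonempty
  refine ⟨i / ℓ, lt_of_mem hi, hi, fun hgt => ?_⟩
  have lt_next : (i : ℚ) / ℓ < (i + 1) / ℓ := by gcongr; exact lt_add_one _
  have mem_next : u ∈ V ((i + 1) / ℓ) :=
    VFilt.gt_le_of_eqOn_Ioc hV.antitone
      (fun γ hγ => hconst i γ _ hγ (Set.right_mem_Ioc.2 lt_next)) hgt
  exact (hmax (i + 1) (by exact_mod_cast mem_next)).not_gt (lt_add_one i)

variable [CharZero k]

theorem mem_gt_of_DT_mem_gt (hV : IsWeakVFiltration T D C V) (hβ : β ≠ 0) (hu : u ∈ V β)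
    (hDT : D (T u) ∈ VFilt.gt V β) : u ∈ VFilt.gt V β := by
  set f : Module.End k M := -(D * T) + (β : k) • 1 with hf
  have hf_mem : f ∈ VFilt.A0 T D C :=
    add_mem (Algebra.subset_adjoin (by simp)) (Subalgebra.smul_mem _ (one_mem _) _)
  have hf_gt : (VFilt.gt V β).map f ≤ VFilt.gt V β :=
    VFilt.map_gt_le fun γ _ => hV.stable f hf_mem γ
  have hfu : f u - (β : k) • u ∈ VFilt.gt V β := by
    simpa [hf] using hDT
  obtain ⟨N, -, hN⟩ := hV.nilpotent β
  have hpow : (β : k) ^ N • u ∈ VFilt.gt V β := by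
    have hfN : (f ^ N) u ∈ VFilt.gt V β := hN u hu
    simpa only [sub_sub_cancel] using
      sub_mem hfN (pow_apply_sub_pow_smul_mem hf_gt hfu N)
  exact (Submodule.smul_mem_iff _ (pow_ne_zero N (Rat.cast_ne_zero.2 hβ))).1 hpow

theorem mem_of_DT_mem (hV : IsWeakVFiltration T D C V) (hα : α ≤ 0) (hDT : D (T u) ∈ V α) :
    u ∈ V α := by
  by_contra hu
  obtain ⟨β, hβα, huβ, hu_gt⟩ := hV.exists_lt_mem_notMem_gt hu
  exact hu_gt (hV.mem_gt_of_DT_mem_gt (hβα.trans_le hα).ne huβ (VFilt.le_gt hβα hDT))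

theorem comapT_eq_of_nonpos (hV : IsWeakVFiltration T D C V) (hα : α ≤ 0) :
    (V (α + 1)).comap T = V α := by
  refine le_antisymm (fun u hu => hV.mem_of_DT_mem hα ?_)
    (Submodule.map_le_iff_le_comap.1 (hV.mapT_le α))
  simpa only [add_sub_cancel_right] using hV.mapD_le (α + 1) (Submodule.mem_map_of_mem hu)

theorem comapT_eq_sup_ker (hV : IsWeakVFiltration T D C V)
    (hT : ∀ α : ℚ, 0 < α → (V α).map T = V (α + 1)) (α : ℚ) :
    (V (α + 1)).comap T = V α ⊔ LinearMap.ker T := by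
  rcases le_or_gt α 0 with hα | hα
  · have ker_le : LinearMap.ker T ≤ V α := hV.comapT_eq_of_nonpos hα ▸ LinearMap.ker_le_comap T
    rw [hV.comapT_eq_of_nonpos hα, sup_eq_left.2 ker_le]
  · rw [← hT α hα, Submodule.comap_map_eq]

end IsWeakVFiltration

theorem stmt10_general {k : Type*} [Field k] [CharZero k]
    {M : Type*} [AddCommGroup M] [Module k M]
    {T D : Module.End k M} {C : Set (Module.End k M)} {V : ℚ → Submodule k M}
    (hV : IsWeakVFiltration T D C V)
    (hT : ∀ α : ℚ, 0 < α → (V α).map T = V (α + 1)) :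
    (∀ α : ℚ, (V (α + 1)).comap T = V α ⊔ LinearMap.ker T) ∧
    (Function.Surjective T → ∀ α : ℚ, V (α + 1) = (V α).map T) := by
  refine ⟨hV.comapT_eq_sup_ker hT, fun hsurj α => ?_⟩
  calc V (α + 1) = ((V (α + 1)).comap T).map T :=
        (Submodule.map_comap_eq_of_surjective hsurj _).symm
    _ = (V α ⊔ LinearMap.ker T).map T := by rw [hV.comapT_eq_sup_ker hT]
    _ = (V α).map T := by
        rw [Submodule.map_sup, LinearMap.le_ker_iff_map.1 le_rfl, sup_bot_eq]

/-- **Corollary 3.11.** If `T` is injective on `M`, then `u ∈ V^α ↔ T u ∈ V^{α+1}`;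
if moreover `T` is bijective, then `V^{α+1} = T(V^α)` for every `α`. -/
theorem stmt10 {k : Type*} [Field k] [CharZero k]
    {M : Type*} [AddCommGroup M] [Module k M]
    (T D : Module.End k M) (C : Set (Module.End k M))
    (hweyl : D * T - T * D = 1)
    (hC : ∀ c ∈ C, Commute c T ∧ Commute c D)
    (V : ℚ → Submodule k M) (hV : IsVFiltration T D C V)
    (hinj : Function.Injective (⇑T)) :
    (∀ (u : M) (α : ℚ), u ∈ V α ↔ T u ∈ V (α + 1)) ∧
    (Function.Bijective (⇑T) → ∀ α : ℚ, V (α + 1) = (V α).map T) := by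
  obtain ⟨hcomap, hmap⟩ := stmt10_general hV.toIsWeakVFiltration hV.mapT_eq
  exact ⟨fun u α => by rw [← Submodule.mem_comap, hcomap, LinearMap.ker_eq_bot.2 hinj, sup_bot_eq],
    fun hbij => hmap hbij.surjective⟩
end
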